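/- arXiv:0907.0873 — 2 statements merged into one kernel-verified Lean document; each statement's English description precedes it below -/
import Mathlib

section
/- Let N = 2 and let ρ : R² → [0,∞) be a C¹ function with compact support, P = Kρ^γ with K > 0 and γ > 1, and Φ(x) = g∫_{R²} log|x−y| ρ(y) dy with g > 0. If the hydrostatic equilibrium equation ∇P(x) = −ρ(x)∇Φ(x) holds for all x, then ∫ P(x) dx = gM²/4, where M = ∫ ρ(x) dx is the total mass. -/
open MeasureTheory Real Filter
open scoped RealInnerProductSpace Topology

noncomputable section

/-- Euclidean space `ℝ^N`. -/
abbrev Euc (N : ℕ) := EuclideanSpace ℝ (Fin N)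

/-- Divergence of a vector field on `ℝ^N`. -/
def ediv {N : ℕ} (v : Euc N → Euc N) (x : Euc N) : ℝ :=
  ∑ i, fderiv ℝ (fun y => v y i) x (EuclideanSpace.single i 1)

/-- Partial derivative of a scalar field in the `i`-th coordinate direction. -/
def epartial {N : ℕ} (i : Fin N) (f : Euc N → ℝ) (x : Euc N) : ℝ :=
  fderiv ℝ f x (EuclideanSpace.single i 1)

/-- Green's function of the Poisson equation in `ℝ^N`:
`log |x|` for `N = 2` and `-|x|^(2-N)` for `N ≥ 3`. -/
def green (N : ℕ) (x : Euc N) : ℝ :=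
  if N = 2 then Real.log ‖x‖ else -(‖x‖ ^ ((2 : ℝ) - (N : ℝ)))

/-- Gravitational potential `Φ(t,x) = g ∫ G(x-y) ρ(t,y) dy`. -/
def potential (N : ℕ) (g : ℝ) (ρ : ℝ → Euc N → ℝ) (t : ℝ) (x : Euc N) : ℝ :=
  g * ∫ y, green N (x - y) * ρ t y

/-- A classical solution on `[0,T)` (with `T : EReal`, so `T = ⊤` means a global
solution) of the `N`-dimensional Euler–Poisson equations with pressure
`P = K ρ^γ`, damping constant `β` and gravitational constant `g`:
nonnegative `C¹` density `ρ`, `C¹` velocity `u`, with `ρ(t,·)` supported in a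
fixed bounded open set `Ω`, satisfying the continuity and momentum equations
pointwise. -/
structure IsEPSolution (N : ℕ) (K γ β g : ℝ) (Ω : Set (Euc N)) (T : EReal)
    (ρ : ℝ → Euc N → ℝ) (u : ℝ → Euc N → Euc N) : Prop where
  rho_nonneg : ∀ t x, 0 ≤ ρ t x
  rho_C1 : ContDiff ℝ 1 (fun p : ℝ × Euc N => ρ p.1 p.2)
  u_C1 : ContDiff ℝ 1 (fun p : ℝ × Euc N => u p.1 p.2)
  omega_open : IsOpen Ω
  omega_bounded : Bornology.IsBounded Ω
  support_subset : ∀ t : ℝ, 0 ≤ t → (t : EReal) < T → Function.support (ρ t) ⊆ Ω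
  continuity_eq : ∀ t : ℝ, 0 ≤ t → (t : EReal) < T → ∀ x : Euc N,
    deriv (fun s => ρ s x) t + ediv (fun y => ρ t y • u t y) x = 0
  momentum_eq : ∀ t : ℝ, 0 ≤ t → (t : EReal) < T → ∀ x : Euc N, ∀ j : Fin N,
    deriv (fun s => ρ s x * u s x j) t
      + (∑ i, epartial i (fun y => ρ t y * u t y i * u t y j) x)
      + epartial j (fun y => K * ρ t y ^ γ) x
      = -(ρ t x * epartial j (potential N g ρ t) x) - β * ρ t x * u t x j

/-- Total energy (case `γ > 1`):
`E(t) = ∫_Ω (½ ρ|u|² + P/(γ-1) + ½ ρΦ) dx` with `P = K ρ^γ`. -/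
def energy (N : ℕ) (K γ g : ℝ) (Ω : Set (Euc N)) (ρ : ℝ → Euc N → ℝ)
    (u : ℝ → Euc N → Euc N) (t : ℝ) : ℝ :=
  ∫ x in Ω, ((1 / 2) * ρ t x * ‖u t x‖ ^ 2 + K * ρ t x ^ γ / (γ - 1)
    + (1 / 2) * ρ t x * potential N g ρ t x)

/-- Isothermal total energy (case `γ = 1`, `P = Kρ`):
`E(t) = ∫_Ω (½ ρ|u|² + Kρ log ρ + ½ ρΦ) dx` (note `ρ log ρ = 0` where `ρ = 0`
since `Real.log 0 = 0`). -/
def energyIso (N : ℕ) (K g : ℝ) (Ω : Set (Euc N)) (ρ : ℝ → Euc N → ℝ)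
    (u : ℝ → Euc N → Euc N) (t : ℝ) : ℝ :=
  ∫ x in Ω, ((1 / 2) * ρ t x * ‖u t x‖ ^ 2 + K * ρ t x * Real.log (ρ t x)
    + (1 / 2) * ρ t x * potential N g ρ t x)

/-- Second inertia function `H(t) = ∫_Ω ρ(t,x)|x|² dx`. -/
def inertia (N : ℕ) (Ω : Set (Euc N)) (ρ : ℝ → Euc N → ℝ) (t : ℝ) : ℝ :=
  ∫ x in Ω, ρ t x * ‖x‖ ^ 2

/-- Maximal radius of the support of `ρ(t,·)`. -/
def maxRadius (N : ℕ) (ρ : ℝ → Euc N → ℝ) (t : ℝ) : ℝ :=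
  sSup ((fun x : Euc N => ‖x‖) '' Function.support (ρ t))

/-!
Test the hydrostatic equation against the field `x`. Integrating by parts, `∫ DP(x) x` equals minus
the dimension times `∫ P`, so it remains to evaluate the virial `∫ ρ(x) DU(x) x`, where `U` is the
logarithmic potential of `ρ`. This is the derivative at `c = 1` of the interaction
`A c = ∬ log ‖c x - y‖ ρ(x) ρ(y)`. Since `log ‖c x - y‖ = log c + log ‖x - c⁻¹ y‖`, exchanging the
roles of `x` and `y` gives `A c = M ^ 2 * log c + A c⁻¹`; differentiating at `c = 1` yields
`2 * A' 1 = M ^ 2`, without ever differentiating the singular kernel.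
-/

open scoped Convolution

section Integration

lemma integrable_mul_comp_sub_mul
    {G : Type*} [TopologicalSpace G] [AddCommGroup G] [IsTopologicalAddGroup G]
    [SecondCountableTopology G] [LocallyCompactSpace G] [MeasurableSpace G] [BorelSpace G]
    {μ : Measure G} [μ.IsAddHaarMeasure]
    {X : Type*} [TopologicalSpace X] [MeasurableSpace X] [OpensMeasurableSpace X]
    {ν : Measure X} [IsFiniteMeasureOnCompacts ν]
    {k : G → ℝ} (hk : Measurable k) (hk_int : LocallyIntegrable k μ)
    {a : X → G} (ha : Continuous a)
    {u : X → ℝ} (hu : Continuous u) (hu_supp : HasCompactSupport u)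
    {v : G → ℝ} (hv : Continuous v) (hv_supp : HasCompactSupport v) :
    Integrable (fun p : X × G => u p.1 * (k (a p.1 - p.2) * v p.2)) (ν.prod μ) := by
  have hmeas : Measurable (fun p : X × G => u p.1 * (k (a p.1 - p.2) * v p.2)) := by fun_prop
  rw [integrable_prod_iff hmeas.aestronglyMeasurable]
  refine ⟨.of_forall fun x => ?_, ?_⟩
  · have h := hv_supp.convolutionExists_right (ContinuousLinearMap.mul ℝ ℝ) hk_int hv (a x)
    exact h.integrable_swap.const_mul (u x)
  · have hconv : Continuous ((fun z => ‖k z‖) ⋆[ContinuousLinearMap.mul ℝ ℝ, μ] fun y => ‖v y‖) :=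
      hv_supp.norm.continuous_convolution_right _ (fun x => (hk_int x).norm) hv.norm
    have hcont := hu.norm.mul (hconv.comp ha)
    refine (hcont.integrable_of_hasCompactSupport hu_supp.norm.mul_right).congr
      (.of_forall fun x => ?_)
    simp only [norm_mul, integral_const_mul, Pi.mul_apply, Function.comp_apply,
      convolution_mul_swap]

variable {E : Type*} [NormedAddCommGroup E] [NormedSpace ℝ E] [MeasurableSpace E] [BorelSpace E]

lemma hasDerivAt_integral_mul_comp_smul {μ : Measure E} [IsFiniteMeasureOnCompacts μ]
    {w f : E → ℝ} (hw : Continuous w) (hw_supp : HasCompactSupport w) (hf : ContDiff ℝ 1 f)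
    (c : ℝ) :
    HasDerivAt (fun c : ℝ => ∫ x, w x * f (c • x) ∂μ) (∫ x, w x * fderiv ℝ f (c • x) x ∂μ) c := by
  have hf' : Continuous (fderiv ℝ f) := hf.continuous_fderiv one_ne_zero
  have hcont (s : ℝ) : Continuous fun x => w x * f (s • x) :=
    hw.mul (hf.continuous.comp (continuous_const_smul s))
  have hcont' : Continuous fun p : ℝ × E => fderiv ℝ f (p.1 • p.2) p.2 :=
    (hf'.comp (continuous_fst.smul continuous_snd)).clm_apply continuous_snd
  have hF' : Continuous fun p : ℝ × E => w p.2 * fderiv ℝ f (p.1 • p.2) p.2 :=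
    (hw.comp continuous_snd).mul hcont'
  obtain ⟨C, hC⟩ := ((isCompact_closedBall c 1).prod hw_supp.isCompact).exists_bound_of_continuousOn
    hcont'.continuousOn
  refine (hasDerivAt_integral_of_dominated_loc_of_deriv_le
    (F' := fun s x => w x * fderiv ℝ f (s • x) x) (bound := fun x => ‖w x‖ * C)
    (Metric.closedBall_mem_nhds c one_pos) (.of_forall fun s => (hcont s).aestronglyMeasurable)
    ((hcont c).integrable_of_hasCompactSupport hw_supp.mul_right)
    (hF'.comp (Continuous.prodMk_right c)).aestronglyMeasurable
    (.of_forall fun x s hs => ?_)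
    ((hw.integrable_of_hasCompactSupport hw_supp).norm.mul_const C)
    (.of_forall fun x s _ => ?_)).2
  · rw [norm_mul]
    by_cases hx : x ∈ tsupport w
    · gcongr
      exact hC (s, x) ⟨hs, hx⟩
    · simp [image_eq_zero_of_notMem_tsupport hx]
  · have hsmul : HasDerivAt (fun s : ℝ => s • x) x s := by
      simpa using (hasDerivAt_id s).smul_const x
    exact (((hf.differentiable one_ne_zero) _).hasFDerivAt.comp_hasDerivAt s hsmul).const_mul (w x)

variable [FiniteDimensional ℝ E] {μ : Measure E} [μ.IsAddHaarMeasure]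

lemma integral_clm_mul_fderiv {f : E → ℝ} (hf : ContDiff ℝ 1 f) (hf_supp : HasCompactSupport f)
    (ℓ : E →L[ℝ] ℝ) (v : E) :
    ∫ x, ℓ x * fderiv ℝ f x v ∂μ = -(ℓ v * ∫ x, f x ∂μ) := by
  have hf' : Continuous fun x => fderiv ℝ f x v :=
    (hf.continuous_fderiv one_ne_zero).clm_apply continuous_const
  have hint := hf.continuous.integrable_of_hasCompactSupport (μ := μ) hf_supp
  rw [integral_mul_fderiv_eq_neg_fderiv_mul_of_integrable]
  · simp [integral_const_mul]
  · simpa using hint.const_mul (ℓ v)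
  · exact (ℓ.continuous.mul hf').integrable_of_hasCompactSupport (hf_supp.fderiv_apply ℝ v).mul_left
  · exact (ℓ.continuous.mul hf.continuous).integrable_of_hasCompactSupport hf_supp.mul_left
  · exact fun x _ => ℓ.differentiableAt
  · exact fun x _ => hf.differentiable one_ne_zero x

lemma integral_fderiv_apply_self {f : E → ℝ} (hf : ContDiff ℝ 1 f) (hf_supp : HasCompactSupport f) :
    ∫ x, fderiv ℝ f x x ∂μ = -(Module.finrank ℝ E * ∫ x, f x ∂μ) := by
  let b := Module.finBasis ℝ E
  let ℓ i : E →L[ℝ] ℝ := (b.coord i).toContinuousLinearMap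
  have hsum (x : E) : fderiv ℝ f x x = ∑ i, ℓ i x * fderiv ℝ f x (b i) := by
    have h := congrArg (fderiv ℝ f x) (b.sum_repr x).symm
    simpa [ℓ, -Module.Basis.sum_repr] using h
  have hint (i) : Integrable (fun x => ℓ i x * fderiv ℝ f x (b i)) μ :=
    ((ℓ i).continuous.mul ((hf.continuous_fderiv one_ne_zero).clm_apply
      continuous_const)).integrable_of_hasCompactSupport (hf_supp.fderiv_apply ℝ (b i)).mul_left
  simp_rw [hsum]
  rw [integral_finsetSum _ fun i _ => hint i]
  simp_rw [integral_clm_mul_fderiv hf hf_supp]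
  simp [ℓ]

lemma locallyIntegrable_log_norm [Nontrivial E] : LocallyIntegrable (fun x : E => log ‖x‖) μ := by
  have hball (r : ℝ) : IntegrableOn (fun x : E => log ‖x‖) (Metric.ball 0 r) μ := by
    rw [integrableOn_fun_norm_addHaar]
    have hlog : IntegrableOn log (Set.Icc 0 r) :=
      (integrableOn_Icc_iff_integrableOn_Ioc).2 intervalIntegral.intervalIntegrable_log'.1
    exact (hlog.continuousOn_smul (by fun_prop) isCompact_Icc).mono_set Set.Ioo_subset_Icc_self
  exact fun x => ⟨Metric.ball 0 (‖x‖ + 1), Metric.isOpen_ball.mem_nhds (by simp), hball _⟩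

end Integration

section LogPotential

variable {E : Type*} [NormedAddCommGroup E] [NormedSpace ℝ E] [FiniteDimensional ℝ E]
  [MeasurableSpace E] [BorelSpace E]

/-- The logarithmic potential `x ↦ ∫ log ‖x - y‖ ρ(y) dμ(y)` of a density `ρ`, without the
gravitational constant. In the plane it is the Newtonian potential, up to normalization. -/
def logPotential (μ : Measure E) (ρ : E → ℝ) (x : E) : ℝ := ∫ y, log ‖x - y‖ * ρ y ∂μ

variable [Nontrivial E] {μ : Measure E} [μ.IsAddHaarMeasure] {ρ σ : E → ℝ}

lemma contDiff_logPotential {n : ℕ∞} (hρ : ContDiff ℝ n ρ) (hρ_supp : HasCompactSupport ρ) :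
    ContDiff ℝ n (logPotential μ ρ) := by
  have hconv : logPotential μ ρ = (fun x : E => log ‖x‖) ⋆[ContinuousLinearMap.mul ℝ ℝ, μ] ρ :=
    funext fun x => by rw [convolution_mul_swap, logPotential]
  rw [hconv]
  exact hρ_supp.contDiff_convolution_right _ locallyIntegrable_log_norm hρ

lemma integrable_log_norm_sub_mul (hρ : Continuous ρ) (hρ_supp : HasCompactSupport ρ) (x : E) :
    Integrable (fun y => log ‖x - y‖ * ρ y) μ :=
  (hρ_supp.convolutionExists_right (ContinuousLinearMap.mul ℝ ℝ) locallyIntegrable_log_norm hρ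
    x).integrable_swap

-- For `c < 0` the constant is `log |c|`, which is what Mathlib's `log c` means.
lemma integral_log_norm_smul_sub_mul (hρ : Continuous ρ) (hρ_supp : HasCompactSupport ρ)
    {c : ℝ} (hc : c ≠ 0) (y : E) :
    ∫ x, log ‖c • x - y‖ * ρ x ∂μ = log c * ∫ x, ρ x ∂μ + logPotential μ ρ (c⁻¹ • y) := by
  have hlog : ∀ᵐ x ∂μ, log ‖c • x - y‖ * ρ x = log c * ρ x + log ‖c⁻¹ • y - x‖ * ρ x := by
    filter_upwards [Measure.ae_ne μ (c⁻¹ • y)] with x hx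
    have hfactor : c • x - y = c • (x - c⁻¹ • y) := by rw [smul_sub, smul_inv_smul₀ hc]
    rw [hfactor, norm_smul, log_mul (norm_ne_zero_iff.2 hc) (norm_ne_zero_iff.2 (sub_ne_zero.2 hx)),
      norm_eq_abs, log_abs, norm_sub_rev, add_mul]
  rw [integral_congr_ae hlog, integral_add
    ((hρ.integrable_of_hasCompactSupport hρ_supp).const_mul _)
    (integrable_log_norm_sub_mul hρ hρ_supp _), integral_const_mul, logPotential]

lemma integral_mul_logPotential_smul (hρ : Continuous ρ) (hρ_supp : HasCompactSupport ρ)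
    (hσ : Continuous σ) (hσ_supp : HasCompactSupport σ) {c : ℝ} (hc : c ≠ 0) :
    ∫ x, ρ x * logPotential μ σ (c • x) ∂μ =
      log c * (∫ x, ρ x ∂μ) * (∫ x, σ x ∂μ) + ∫ x, σ x * logPotential μ ρ (c⁻¹ • x) ∂μ := by
  have hint_log : Integrable (fun x => σ x * (log c * ∫ y, ρ y ∂μ)) μ :=
    (hσ.integrable_of_hasCompactSupport hσ_supp).mul_const _
  have hU : Continuous (logPotential μ ρ) :=
    (contDiff_logPotential (n := 0) (contDiff_zero.2 hρ) hρ_supp).continuous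
  have hint_pot : Integrable (fun x => σ x * logPotential μ ρ (c⁻¹ • x)) μ :=
    (hσ.mul (hU.comp (continuous_const_smul _))).integrable_of_hasCompactSupport hσ_supp.mul_right
  calc
    ∫ x, ρ x * logPotential μ σ (c • x) ∂μ
      = ∫ x, ∫ y, ρ x * (log ‖c • x - y‖ * σ y) ∂μ ∂μ := by
        simp only [logPotential, integral_const_mul]
    _ = ∫ y, ∫ x, ρ x * (log ‖c • x - y‖ * σ y) ∂μ ∂μ :=
        integral_integral_swap <| integrable_mul_comp_sub_mul (by fun_prop)
          locallyIntegrable_log_norm (continuous_const_smul c) hρ hρ_supp hσ hσ_supp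
    _ = ∫ y, σ y * (log c * ∫ x, ρ x ∂μ + logPotential μ ρ (c⁻¹ • y)) ∂μ := by
        simp only [← integral_log_norm_smul_sub_mul hρ hρ_supp hc]
        simp only [← integral_const_mul, mul_comm, mul_left_comm]
    _ = log c * (∫ x, ρ x ∂μ) * (∫ x, σ x ∂μ) + ∫ x, σ x * logPotential μ ρ (c⁻¹ • x) ∂μ := by
        simp only [mul_add]
        rw [integral_add hint_log hint_pot, integral_mul_const]
        ring

theorem integral_mul_fderiv_logPotential (hρ : ContDiff ℝ 1 ρ) (hρ_supp : HasCompactSupport ρ) :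
    ∫ x, ρ x * fderiv ℝ (logPotential μ ρ) x x ∂μ = (∫ x, ρ x ∂μ) ^ 2 / 2 := by
  set M := ∫ x, ρ x ∂μ
  set A : ℝ → ℝ := fun c => ∫ x, ρ x * logPotential μ ρ (c • x) ∂μ
  set V := ∫ x, ρ x * fderiv ℝ (logPotential μ ρ) x x ∂μ
  have hA : HasDerivAt A V 1 := by
    simpa only [one_smul] using hasDerivAt_integral_mul_comp_smul hρ.continuous hρ_supp
      (contDiff_logPotential (n := 1) hρ hρ_supp) 1
  have hA_inv : HasDerivAt (fun c => A c⁻¹) (-V) 1 := by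
    have hA' : HasDerivAt A V (1 : ℝ)⁻¹ := by rwa [inv_one]
    simpa [Function.comp_def] using hA'.comp 1 (hasDerivAt_inv one_ne_zero)
  have hA_eq : A =ᶠ[𝓝 1] fun c => log c * M * M + A c⁻¹ := by
    filter_upwards [eventually_ne_nhds one_ne_zero] with c hc
    exact integral_mul_logPotential_smul hρ.continuous hρ_supp hρ.continuous hρ_supp hc
  have hA_rhs : HasDerivAt (fun c => log c * M * M + A c⁻¹) (1 * M * M + -V) 1 := by
    have hlog : HasDerivAt log 1 1 := by simpa using hasDerivAt_log one_ne_zero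
    exact ((hlog.mul_const M).mul_const M).add hA_inv
  have hV : V = 1 * M * M + -V := hA.unique (hA_rhs.congr_of_eventuallyEq hA_eq)
  linarith

end LogPotential

theorem pressure_integral_2d_general {E : Type*} [NormedAddCommGroup E] [InnerProductSpace ℝ E]
    [FiniteDimensional ℝ E] [Nontrivial E] [MeasurableSpace E] [BorelSpace E]
    {μ : Measure E} [μ.IsAddHaarMeasure] {g : ℝ} {P ρ Φ : E → ℝ}
    (hP : ContDiff ℝ 1 P) (hP_supp : HasCompactSupport P)
    (hρ : ContDiff ℝ 1 ρ) (hρ_supp : HasCompactSupport ρ)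
    (hΦ : ∀ x, Φ x = g * logPotential μ ρ x)
    (hhyd : ∀ x, gradient P x = -(ρ x) • gradient Φ x) :
    ∫ x, P x ∂μ = g * (∫ x, ρ x ∂μ) ^ 2 / (2 * Module.finrank ℝ E) := by
  have hU := (contDiff_logPotential (μ := μ) (n := 1) hρ hρ_supp).differentiable one_ne_zero
  have hΦ' (x : E) : fderiv ℝ Φ x x = g * fderiv ℝ (logPotential μ ρ) x x := by
    rw [funext hΦ, fderiv_const_mul (hU x), smul_apply, smul_eq_mul]
  have hradial (x : E) :
      fderiv ℝ P x x = -g * (ρ x * fderiv ℝ (logPotential μ ρ) x x) := by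
    rw [← inner_gradient_left, hhyd, real_inner_smul_left, inner_gradient_left, hΦ']
    ring
  have hvirial := integral_fderiv_apply_self (μ := μ) hP hP_supp
  simp_rw [hradial] at hvirial
  rw [integral_const_mul, integral_mul_fderiv_logPotential hρ hρ_supp] at hvirial
  have hdim : (Module.finrank ℝ E : ℝ) ≠ 0 := mod_cast Module.finrank_pos.ne'
  field_simp
  linarith

/-- For a 2-D hydrostatic equilibrium `∇P = -ρ∇Φ` with
`P = Kρ^γ` and `Φ(x) = g∫ log|x-y| ρ(y) dy`, the total pressure integral is
`∫ P dx = gM²/4`. -/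
theorem pressure_integral_2d (K γ g : ℝ) (hK : 0 < K) (hγ : 1 < γ) (hg : 0 < g)
    (ρ : Euc 2 → ℝ) (hρ : ContDiff ℝ 1 ρ) (hsupp : HasCompactSupport ρ)
    (hnn : ∀ x, 0 ≤ ρ x)
    (Φ : Euc 2 → ℝ) (hΦ : ∀ x, Φ x = g * ∫ y, Real.log ‖x - y‖ * ρ y)
    (hhyd : ∀ x, gradient (fun z => K * ρ z ^ γ) x = -(ρ x) • gradient Φ x) :
    ∫ x, K * ρ x ^ γ = g * (∫ x, ρ x) ^ 2 / 4 := by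
  have hP : ContDiff ℝ 1 fun z => K * ρ z ^ γ :=
    contDiff_const.mul (hρ.rpow_const_of_le (mod_cast hγ.le))
  have hP_supp : HasCompactSupport fun z => K * ρ z ^ γ :=
    hsupp.comp_left (g := fun r => K * r ^ γ) (by simp [zero_rpow (by linarith : γ ≠ 0)])
  convert pressure_integral_2d_general hP hP_supp hρ hsupp hΦ hhyd using 2
  norm_num [finrank_euclideanSpace]
end
end

section
/- Let N ≥ 3 and let ρ : R^N → [0,∞) be a C¹ function with compact support, P = Kρ^γ with K > 0 and γ > 1, and Φ(x) = −g∫ ρ(y)/|x−y|^{N−2} dy with g > 0, satisfying ∇P(x) = −ρ(x)∇Φ(x) for all x. Then the total energy E = ∫ (P/(γ−1) + ½ρΦ) dx of this stationary solution equals ((2N−2−Nγ)/((γ−1)(N−2))) ∫ P(x) dx. -/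
open MeasureTheory Real Filter
open scoped RealInnerProductSpace Topology

noncomputable section

/-!
Everything follows from dilating test functions. If `w` is locally integrable and homogeneous of
degree `s` on a `d`-dimensional space, then `∫ w(x) f(lx) dx = l^(-(s+d)) ∫ w f`, and
differentiating at `l = 1` gives `∫ w (x · ∇f) = -(s+d) ∫ w f` without ever differentiating the
singular weight `w`. For `w = 1` this is `∫ x · ∇f = -d ∫ f`. For a kernel `w = k` it gives
`x · ∇(k ⋆ ρ) = (s+d) (k ⋆ ρ) + k ⋆ (x · ∇ρ)`; pairing with `ρ`, using the symmetry of `k` and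
integrating by parts yields `∫ ρ (x · ∇(k ⋆ ρ)) = (s/2) ∫ ρ (k ⋆ ρ)`. Testing the force balance
`∇P = -ρ∇Φ`, `Φ = k ⋆ ρ`, against `x` therefore gives the virial identity `s ∫ ρΦ = 2d ∫ P`.
-/

section Virial

open ContinuousLinearMap Module
open scoped Convolution Pointwise

variable {E : Type*} [NormedAddCommGroup E] [NormedSpace ℝ E]

/-- The Euler operator `x ↦ x · ∇f(x)`, the infinitesimal generator of the dilations
`f ↦ f (l • ·)` at `l = 1`. -/
def eulerDeriv (f : E → ℝ) (x : E) : ℝ := fderiv ℝ f x x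

/-- Positive homogeneity of real degree `s`: only dilations by positive scalars are constrained,
so the conventions of `Real.rpow` at nonpositive bases play no role in the factor `l ^ s`. -/
def IsPosHomogeneous (s : ℝ) (f : E → ℝ) : Prop :=
  ∀ l : ℝ, 0 < l → ∀ x, f (l • x) = l ^ s * f x

lemma isPosHomogeneous_zero_const (c : ℝ) : IsPosHomogeneous 0 (fun _ : E => c) :=
  fun l _ _ => by rw [rpow_zero, one_mul]

lemma isPosHomogeneous_const_mul_norm_rpow (c s : ℝ) :
    IsPosHomogeneous s (fun x : E => c * ‖x‖ ^ s) := fun l hl x => by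
  beta_reduce
  rw [norm_smul, norm_of_nonneg hl.le, mul_rpow hl.le (norm_nonneg x), mul_left_comm]

lemma eulerDeriv_mul {f h : E → ℝ} (hf : Differentiable ℝ f) (hh : Differentiable ℝ h) (x : E) :
    eulerDeriv (fun x => f x * h x) x = f x * eulerDeriv h x + h x * eulerDeriv f x := by
  simp only [eulerDeriv, fderiv_fun_mul (hf x) (hh x), add_apply, smul_apply, smul_eq_mul]

lemma eulerDeriv_comp_const_sub {f : E → ℝ} (hf : Differentiable ℝ f) (a x : E) :
    eulerDeriv (fun y => f (a - y)) x = -fderiv ℝ f (a - x) x := by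
  have h := (hf (a - x)).hasFDerivAt.comp x ((hasFDerivAt_id x).const_sub a)
  simpa [eulerDeriv, Function.comp_def] using congrArg (· x) h.fderiv

lemma hasDerivAt_comp_smul {f : E → ℝ} (hf : Differentiable ℝ f) (l : ℝ) (x : E) :
    HasDerivAt (fun l : ℝ => f (l • x)) (fderiv ℝ f (l • x) x) l := by
  have h : HasDerivAt (fun l : ℝ => l • x) x l := by simpa using (hasDerivAt_id l).smul_const x
  exact (hf (l • x)).hasFDerivAt.comp_hasDerivAt l h

lemma continuous_eulerDeriv {f : E → ℝ} (hf : ContDiff ℝ 1 f) : Continuous (eulerDeriv f) :=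
  (hf.continuous_fderiv one_ne_zero).clm_apply continuous_id

lemma hasCompactSupport_eulerDeriv {f : E → ℝ} (hc : HasCompactSupport f) :
    HasCompactSupport (eulerDeriv f) :=
  (hc.fderiv ℝ).mono fun x hx h => hx (by simp [eulerDeriv, h])

lemma exists_norm_fderiv_smul_apply_le_indicator {f : E → ℝ} (hf : ContDiff ℝ 1 f)
    (hc : HasCompactSupport f) :
    ∃ C R : ℝ, ∀ l ∈ Set.Ioo (1 / 2 : ℝ) 2, ∀ x,
      ‖fderiv ℝ f (l • x) x‖ ≤ (Metric.closedBall (0 : E) R).indicator (fun _ => C) x := by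
  have hc' := hasCompactSupport_eulerDeriv hc
  obtain ⟨C, hC⟩ := hc'.exists_bound_of_continuous (continuous_eulerDeriv hf)
  obtain ⟨R, hR⟩ := hc'.isCompact.isBounded.subset_closedBall (0 : E)
  refine ⟨2 * C, 2 * R, fun l hl x => ?_⟩
  have hl0 : 0 < l := by linarith [hl.1]
  have hl2 : l⁻¹ ≤ 2 := inv_le_of_inv_le₀ two_pos (by linarith [hl.1])
  have hrescale : fderiv ℝ f (l • x) x = l⁻¹ * eulerDeriv f (l • x) := by
    rw [eulerDeriv, map_smul, smul_eq_mul, inv_mul_cancel_left₀ hl0.ne']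
  rw [hrescale, norm_mul, norm_of_nonneg (inv_pos.2 hl0).le]
  by_cases hx : x ∈ Metric.closedBall (0 : E) (2 * R)
  · rw [Set.indicator_of_mem hx]
    gcongr
    exact hC _
  · have hzero : eulerDeriv f (l • x) = 0 := by
      by_contra hne
      have hmem := hR (subset_tsupport _ hne)
      rw [mem_closedBall_zero_iff, norm_smul, norm_of_nonneg hl0.le] at hmem
      rw [mem_closedBall_zero_iff] at hx
      nlinarith [hl.1, norm_nonneg x]
    rw [Set.indicator_of_notMem hx, hzero, norm_zero, mul_zero]

variable [FiniteDimensional ℝ E] [MeasurableSpace E] [BorelSpace E] {μ : Measure E}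

lemma hasDerivAt_integral_mul_comp_smul_one {w f : E → ℝ} (hw : LocallyIntegrable w μ)
    (hf : ContDiff ℝ 1 f) (hc : HasCompactSupport f) :
    HasDerivAt (fun l : ℝ => ∫ x, w x * f (l • x) ∂μ) (∫ x, w x * eulerDeriv f x ∂μ) 1 := by
  obtain ⟨C, R, hbound⟩ := exists_norm_fderiv_smul_apply_le_indicator hf hc
  have hwm := hw.aestronglyMeasurable
  have hint : Integrable (fun x => w x * f ((1 : ℝ) • x)) μ := by
    simpa only [one_smul, smul_eq_mul] using
      hw.integrable_smul_right_of_hasCompactSupport hf.continuous hc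
  have hbound_int : Integrable
      ((Metric.closedBall (0 : E) R).indicator fun x => ‖w x‖ * C) μ := by
    rw [integrable_indicator_iff measurableSet_closedBall]
    exact (hw.integrableOn_isCompact (isCompact_closedBall _ _)).norm.mul_const C
  have key := (hasDerivAt_integral_of_dominated_loc_of_deriv_le (μ := μ) (x₀ := (1 : ℝ))
    (F := fun l x => w x * f (l • x)) (F' := fun l x => w x * fderiv ℝ f (l • x) x)
    (Ioo_mem_nhds one_half_lt_one one_lt_two)
    (Eventually.of_forall fun l =>
      hwm.mul (hf.continuous.comp (continuous_const_smul l)).aestronglyMeasurable)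
    hint
    (hwm.mul (by
      simpa only [one_smul] using! (continuous_eulerDeriv hf).aestronglyMeasurable))
    (Eventually.of_forall fun x l hl => by
      rw [norm_mul, Set.indicator_mul_right]
      exact mul_le_mul_of_nonneg_left (hbound l hl x) (norm_nonneg _))
    hbound_int
    (Eventually.of_forall fun x l _ =>
      (hasDerivAt_comp_smul (hf.differentiable one_ne_zero) l x).const_mul (w x))).2
  simpa only [one_smul, eulerDeriv] using key

variable [μ.IsAddHaarMeasure]

lemma IsPosHomogeneous.integral_mul_comp_smul {s : ℝ} {w : E → ℝ} (hw : IsPosHomogeneous s w)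
    (f : E → ℝ) {l : ℝ} (hl : 0 < l) :
    ∫ x, w x * f (l • x) ∂μ = l ^ (-(s + finrank ℝ E)) * ∫ x, w x * f x ∂μ := by
  calc ∫ x, w x * f (l • x) ∂μ
      = ∫ x, l ^ (-s) * (w (l • x) * f (l • x)) ∂μ := by
        congr 1 with x
        rw [hw l hl, rpow_neg hl.le]
        field_simp
    _ = l ^ (-s) * ((l ^ finrank ℝ E)⁻¹ * ∫ x, w x * f x ∂μ) := by
        rw [integral_const_mul,
          Measure.integral_comp_smul_of_nonneg μ (fun x => w x * f x) l (hR := hl.le), smul_eq_mul]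
    _ = l ^ (-(s + finrank ℝ E)) * ∫ x, w x * f x ∂μ := by
        rw [← mul_assoc, neg_add, rpow_add hl, rpow_neg hl.le (finrank ℝ E : ℝ), rpow_natCast]

lemma IsPosHomogeneous.integral_mul_eulerDeriv {s : ℝ} {w f : E → ℝ} (hw : IsPosHomogeneous s w)
    (hwi : LocallyIntegrable w μ) (hf : ContDiff ℝ 1 f) (hc : HasCompactSupport f) :
    ∫ x, w x * eulerDeriv f x ∂μ = -(s + finrank ℝ E) * ∫ x, w x * f x ∂μ := by
  have hpow : HasDerivAt (fun l : ℝ => l ^ (-(s + finrank ℝ E)) * ∫ x, w x * f x ∂μ)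
      (-(s + finrank ℝ E) * ∫ x, w x * f x ∂μ) 1 := by
    simpa using (hasDerivAt_rpow_const (p := -(s + finrank ℝ E)) (.inl one_ne_zero)).mul_const _
  refine (hasDerivAt_integral_mul_comp_smul_one hwi hf hc).unique (hpow.congr_of_eventuallyEq ?_)
  filter_upwards [Ioi_mem_nhds one_pos] with l hl using hw.integral_mul_comp_smul f hl

lemma integral_eulerDeriv {f : E → ℝ} (hf : ContDiff ℝ 1 f) (hc : HasCompactSupport f) :
    ∫ x, eulerDeriv f x ∂μ = -finrank ℝ E * ∫ x, f x ∂μ := by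
  simpa using (isPosHomogeneous_zero_const 1).integral_mul_eulerDeriv
    (locallyIntegrable_const (1 : ℝ)) hf hc

lemma IsPosHomogeneous.eulerDeriv_convolution {s : ℝ} {k f : E → ℝ} (hk : IsPosHomogeneous s k)
    (hki : LocallyIntegrable k μ) (hf : ContDiff ℝ 1 f) (hc : HasCompactSupport f) (x : E) :
    eulerDeriv (k ⋆[mul ℝ ℝ, μ] f) x
      = (s + finrank ℝ E) * (k ⋆[mul ℝ ℝ, μ] f) x + (k ⋆[mul ℝ ℝ, μ] eulerDeriv f) x := by
  have hfx : ContDiff ℝ 1 fun t => f (x - t) := hf.comp (contDiff_const.sub contDiff_id)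
  have hcx : HasCompactSupport fun t => f (x - t) := hc.comp_homeomorph (Homeomorph.subLeft x)
  have hdiff : Differentiable ℝ f := hf.differentiable one_ne_zero
  have hfd : Continuous (fderiv ℝ f) := hf.continuous_fderiv one_ne_zero
  have hint₁ : Integrable (fun t => k t * eulerDeriv (fun t => f (x - t)) t) μ :=
    hki.integrable_smul_right_of_hasCompactSupport (continuous_eulerDeriv hfx)
      (hasCompactSupport_eulerDeriv hcx)
  have hint₂ : Integrable (fun t => k t * eulerDeriv f (x - t)) μ :=
    (hasCompactSupport_eulerDeriv hc).convolutionExists_right (mul ℝ ℝ) hki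
      (continuous_eulerDeriv hf) x
  calc eulerDeriv (k ⋆[mul ℝ ℝ, μ] f) x
      = ∫ t, k t * fderiv ℝ f (x - t) x ∂μ := by
        rw [eulerDeriv, (hc.hasFDerivAt_convolution_right (mul ℝ ℝ) hki hf x).fderiv,
          convolution_precompR_apply (mul ℝ ℝ) hki (hc.fderiv ℝ) hfd]
        rfl
    -- The direction splits as `x = (x - t) + t`; the second part is an Euler derivative in `t`.
    _ = ∫ t, (k t * eulerDeriv f (x - t) - k t * eulerDeriv (fun t => f (x - t)) t) ∂μ := by
        congr 1 with t
        rw [eulerDeriv_comp_const_sub hdiff, eulerDeriv, map_sub]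
        ring
    _ = (k ⋆[mul ℝ ℝ, μ] eulerDeriv f) x - ∫ t, k t * eulerDeriv (fun t => f (x - t)) t ∂μ :=
        integral_sub hint₂ hint₁
    _ = (s + finrank ℝ E) * (k ⋆[mul ℝ ℝ, μ] f) x + (k ⋆[mul ℝ ℝ, μ] eulerDeriv f) x := by
        rw [hk.integral_mul_eulerDeriv hki hfx hcx, neg_mul, sub_neg_eq_add, add_comm]
        rfl

lemma integrable_mul_mul_comp_sub {k f h : E → ℝ} (hki : LocallyIntegrable k μ)
    (hf : Continuous f) (hfc : HasCompactSupport f) (hh : Continuous h)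
    (hhc : HasCompactSupport h) :
    Integrable (fun p : E × E => f p.1 * (h p.2 * k (p.1 - p.2))) (μ.prod μ) := by
  obtain ⟨C, hC⟩ := hfc.exists_bound_of_continuous hf
  let D : Set E := tsupport f - tsupport h
  have hD : IsCompact D := by
    simpa only [D, sub_eq_add_neg] using hfc.isCompact.add hhc.isCompact.neg
  have hkD : Integrable (D.indicator k) μ :=
    (integrable_indicator_iff hD.measurableSet).2 (hki.integrableOn_isCompact hD)
  have hcut : Integrable (fun p : E × E => f p.1 * (h p.2 * D.indicator k (p.1 - p.2)))
      (μ.prod μ) :=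
    ((hh.integrable_of_hasCompactSupport hhc).convolution_integrand (mul ℝ ℝ) hkD).bdd_mul
      (hf.comp continuous_fst).aestronglyMeasurable (Eventually.of_forall fun p => hC p.1)
  refine hcut.congr (Eventually.of_forall fun ⟨x, y⟩ => ?_)
  by_cases hx : f x = 0
  · simp only [hx, zero_mul]
  by_cases hy : h y = 0
  · simp only [hy, zero_mul]
  have hmem : x - y ∈ D := Set.sub_mem_sub (subset_tsupport f hx) (subset_tsupport h hy)
  simp only [Set.indicator_of_mem hmem]

lemma integral_mul_convolution_comm {k f h : E → ℝ} (hk : Function.Even k)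
    (hki : LocallyIntegrable k μ) (hf : Continuous f) (hfc : HasCompactSupport f)
    (hh : Continuous h) (hhc : HasCompactSupport h) :
    ∫ x, f x * (k ⋆[mul ℝ ℝ, μ] h) x ∂μ = ∫ x, h x * (k ⋆[mul ℝ ℝ, μ] f) x ∂μ := by
  simp only [convolution_mul_swap, ← integral_const_mul]
  calc ∫ x, ∫ y, f x * (k (x - y) * h y) ∂μ ∂μ
      = ∫ x, ∫ y, f x * (h y * k (x - y)) ∂μ ∂μ := by simp only [mul_comm]
    _ = ∫ y, ∫ x, f x * (h y * k (x - y)) ∂μ ∂μ :=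
        integral_integral_swap (integrable_mul_mul_comp_sub hki hf hfc hh hhc)
    _ = ∫ y, ∫ x, h y * (k (y - x) * f x) ∂μ ∂μ := by
        congr 1 with y
        congr 1 with x
        rw [← hk (x - y), neg_sub]
        ring

lemma IsPosHomogeneous.integral_mul_eulerDeriv_convolution {s : ℝ} {k ρ : E → ℝ}
    (hk : IsPosHomogeneous s k) (hk_even : Function.Even k) (hki : LocallyIntegrable k μ)
    (hρ : ContDiff ℝ 1 ρ) (hc : HasCompactSupport ρ) :
    ∫ x, ρ x * eulerDeriv (k ⋆[mul ℝ ℝ, μ] ρ) x ∂μ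
      = s / 2 * ∫ x, ρ x * (k ⋆[mul ℝ ℝ, μ] ρ) x ∂μ := by
  set Φ := k ⋆[mul ℝ ℝ, μ] ρ with hΦ
  have hΦ1 : ContDiff ℝ 1 Φ := hc.contDiff_convolution_right (mul ℝ ℝ) hki hρ
  have hΦE : Continuous (eulerDeriv Φ) := continuous_eulerDeriv hΦ1
  have hρE : Continuous (eulerDeriv ρ) := continuous_eulerDeriv hρ
  have hρEc : HasCompactSupport (eulerDeriv ρ) := hasCompactSupport_eulerDeriv hc
  have hint : Integrable (fun x => ρ x * Φ x) μ :=
    (hρ.continuous.mul hΦ1.continuous).integrable_of_hasCompactSupport hc.mul_right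
  have hint₁ : Integrable (fun x => ρ x * eulerDeriv Φ x) μ :=
    (hρ.continuous.mul hΦE).integrable_of_hasCompactSupport hc.mul_right
  have hint₂ : Integrable (fun x => Φ x * eulerDeriv ρ x) μ :=
    (hΦ1.continuous.mul hρE).integrable_of_hasCompactSupport hρEc.mul_left
  have hparts : ∫ x, ρ x * eulerDeriv Φ x ∂μ + ∫ x, Φ x * eulerDeriv ρ x ∂μ
      = -finrank ℝ E * ∫ x, ρ x * Φ x ∂μ := by
    rw [← integral_add hint₁ hint₂, ← integral_eulerDeriv (hρ.mul hΦ1) hc.mul_right]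
    simp only [eulerDeriv_mul (hρ.differentiable one_ne_zero) (hΦ1.differentiable one_ne_zero)]
  have hscale : ∫ x, ρ x * eulerDeriv Φ x ∂μ
      = (s + finrank ℝ E) * ∫ x, ρ x * Φ x ∂μ + ∫ x, Φ x * eulerDeriv ρ x ∂μ := by
    have hsymm := integral_mul_convolution_comm hk_even hki hρ.continuous hc hρE hρEc
    have hsplit : ∀ x, ρ x * (k ⋆[mul ℝ ℝ, μ] eulerDeriv ρ) x
        = ρ x * eulerDeriv Φ x - (s + finrank ℝ E) * (ρ x * Φ x) := fun x => by
      rw [hΦ, hk.eulerDeriv_convolution hki hρ hc x]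
      ring
    simp only [hsplit, ← hΦ] at hsymm
    rw [integral_sub hint₁ (hint.const_mul _), integral_const_mul] at hsymm
    simp only [mul_comm (Φ _)]
    linarith
  linarith

/-- Here `hbal` is the radial component of the force balance `∇P = -ρ∇(k ⋆ ρ)`. -/
lemma IsPosHomogeneous.virial {s : ℝ} {k ρ P : E → ℝ} (hk : IsPosHomogeneous s k)
    (hk_even : Function.Even k) (hki : LocallyIntegrable k μ) (hρ : ContDiff ℝ 1 ρ)
    (hρc : HasCompactSupport ρ) (hP : ContDiff ℝ 1 P) (hPc : HasCompactSupport P)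
    (hbal : ∀ x, eulerDeriv P x = -ρ x * eulerDeriv (k ⋆[mul ℝ ℝ, μ] ρ) x) :
    s * ∫ x, ρ x * (k ⋆[mul ℝ ℝ, μ] ρ) x ∂μ = 2 * finrank ℝ E * ∫ x, P x ∂μ := by
  have hPE := integral_eulerDeriv (μ := μ) hP hPc
  simp only [hbal, neg_mul, integral_neg] at hPE
  rw [hk.integral_mul_eulerDeriv_convolution hk_even hki hρ hρc] at hPE
  linarith

lemma locallyIntegrable_const_mul_norm_rpow (c : ℝ) {s : ℝ} (hs : -(finrank ℝ E : ℝ) < s) :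
    LocallyIntegrable (fun x : E => c * ‖x‖ ^ s) μ := by
  rcases subsingleton_or_nontrivial E with _ | _
  · exact continuous_of_discreteTopology.locallyIntegrable
  · refine locallyIntegrable_of_norm_le_rpow finrank_pos (C := |c|) (α := -s) (by linarith)
      (Eventually.of_forall fun x => ?_)
      (by fun_prop : Measurable fun x : E => c * ‖x‖ ^ s).aestronglyMeasurable
    rw [norm_mul, norm_eq_abs, norm_of_nonneg (rpow_nonneg (norm_nonneg x) s), neg_neg]

lemma const_mul_norm_rpow_convolution (c s : ℝ) (ρ : E → ℝ) (x : E) :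
    ((fun z => c * ‖z‖ ^ (-s)) ⋆[mul ℝ ℝ, μ] ρ) x = c * ∫ y, ρ y / ‖x - y‖ ^ s ∂μ := by
  rw [convolution_mul_swap, ← integral_const_mul]
  congr 1 with y
  rw [rpow_neg (norm_nonneg _)]
  ring

theorem stationary_energy_highdim_general {s γ : ℝ} (hs : s ≠ 0) (hγ : γ ≠ 1) {k ρ Φ P : E → ℝ}
    (hk : IsPosHomogeneous s k) (hk_even : Function.Even k) (hki : LocallyIntegrable k μ)
    (hρ : ContDiff ℝ 1 ρ) (hρc : HasCompactSupport ρ) (hP : ContDiff ℝ 1 P)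
    (hPc : HasCompactSupport P) (hΦ : Φ = k ⋆[mul ℝ ℝ, μ] ρ)
    (hbal : ∀ x, eulerDeriv P x = -ρ x * eulerDeriv Φ x) :
    ∫ x, (P x / (γ - 1) + (1 / 2) * ρ x * Φ x) ∂μ
      = (s + finrank ℝ E * (γ - 1)) / ((γ - 1) * s) * ∫ x, P x ∂μ := by
  subst hΦ
  have hΦ : Continuous (k ⋆[mul ℝ ℝ, μ] ρ) :=
    (hρc.contDiff_convolution_right (mul ℝ ℝ) hki hρ).continuous
  have hPint : Integrable P μ := hP.continuous.integrable_of_hasCompactSupport hPc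
  have hρΦint : Integrable (fun x => ρ x * (k ⋆[mul ℝ ℝ, μ] ρ) x) μ :=
    (hρ.continuous.mul hΦ).integrable_of_hasCompactSupport hρc.mul_right
  have hvirial := hk.virial hk_even hki hρ hρc hP hPc hbal
  simp only [mul_assoc (1 / 2 : ℝ)]
  rw [integral_add (hPint.div_const _) (hρΦint.const_mul _), integral_div, integral_const_mul]
  have hγ' : γ - 1 ≠ 0 := sub_ne_zero.2 hγ
  field_simp
  linear_combination (γ - 1) * hvirial

end Virial

lemma eulerDeriv_eq_mul_of_gradient_eq_smul {E : Type*} [NormedAddCommGroup E]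
    [InnerProductSpace ℝ E] [CompleteSpace E] {f h : E → ℝ} {c : ℝ} {x : E}
    (hfh : gradient f x = c • gradient h x) : eulerDeriv f x = c * eulerDeriv h x := by
  rw [eulerDeriv, eulerDeriv, ← inner_gradient_left, hfh, real_inner_smul_left,
    inner_gradient_left]

lemma contDiff_polytrope {E : Type*} [NormedAddCommGroup E] [NormedSpace ℝ E] {ρ : E → ℝ}
    (hρ : ContDiff ℝ 1 ρ) (K : ℝ) {γ : ℝ} (hγ : 1 ≤ γ) : ContDiff ℝ 1 fun x => K * ρ x ^ γ :=
  contDiff_const.mul (hρ.rpow_const_of_le (m := 1) (by simpa using hγ))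

lemma hasCompactSupport_polytrope {X : Type*} [TopologicalSpace X] {ρ : X → ℝ}
    (hρ : HasCompactSupport ρ) (K : ℝ) {γ : ℝ} (hγ : γ ≠ 0) :
    HasCompactSupport fun x => K * ρ x ^ γ :=
  hρ.comp_left (g := fun r => K * r ^ γ) (by rw [zero_rpow hγ, mul_zero])

/-- For an `N ≥ 3` dimensional hydrostatic equilibrium, the
stationary total energy `E = ∫ (P/(γ-1) + ½ρΦ) dx` equals
`((2N-2-Nγ)/((γ-1)(N-2))) ∫ P dx`. -/
theorem stationary_energy_highdim (N : ℕ) (hN : 3 ≤ N) (K γ g : ℝ)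
    (hK : 0 < K) (hγ : 1 < γ) (hg : 0 < g)
    (ρ : Euc N → ℝ) (hρ : ContDiff ℝ 1 ρ) (hsupp : HasCompactSupport ρ)
    (hnn : ∀ x, 0 ≤ ρ x)
    (Φ : Euc N → ℝ)
    (hΦ : ∀ x, Φ x = -(g * ∫ y, ρ y / ‖x - y‖ ^ ((N : ℝ) - 2)))
    (hhyd : ∀ x, gradient (fun z => K * ρ z ^ γ) x = -(ρ x) • gradient Φ x) :
    ∫ x, (K * ρ x ^ γ / (γ - 1) + (1 / 2) * ρ x * Φ x)
      = ((2 * (N : ℝ) - 2 - N * γ) / ((γ - 1) * ((N : ℝ) - 2)))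
          * ∫ x, K * ρ x ^ γ := by
  have hN' : (3 : ℝ) ≤ N := by exact_mod_cast hN
  have hdeg : -(Module.finrank ℝ (Euc N) : ℝ) < -((N : ℝ) - 2) := by
    rw [finrank_euclideanSpace_fin]
    linarith
  have h := stationary_energy_highdim_general (μ := volume) (s := -((N : ℝ) - 2)) (by linarith)
    hγ.ne' (isPosHomogeneous_const_mul_norm_rpow (-g) _) (fun z => by simp only [norm_neg])
    (locallyIntegrable_const_mul_norm_rpow (-g) hdeg) hρ hsupp
    (contDiff_polytrope hρ K hγ.le) (hasCompactSupport_polytrope hsupp K (by linarith))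
    (funext fun x => by rw [hΦ, const_mul_norm_rpow_convolution, neg_mul])
    fun x => eulerDeriv_eq_mul_of_gradient_eq_smul (hhyd x)
  rw [h, finrank_euclideanSpace_fin, mul_neg, div_neg, ← neg_div]
  ring
end
end
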